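/- Let R > 0, r > 0, and let z be a point of the Euclidean plane ℝ² with v = ‖z‖ > 0. Then the area of b(0,r) ∩ b(z,R) equals π·(min(r, max(R−v, 0)))² + 2·∫_{min(r,|R−v|)}^{min(r,R+v)} u·arccos((u² + v² − R²)/(2 u v)) du. -/

import Mathlib

open MeasureTheory Real

/-!
By a linear isometry we may take the plane to be `ℂ` and the centre of the second disc to be the
real number `v`. In polar coordinates the circle of radius `u` about the origin meets that disc in
the points of argument `θ` with `(u² + v² - R²) / (2uv) ≤ cos θ` (law of cosines), an arc of angle
`2 arccos ((u² + v² - R²) / (2uv))`. Hence the area is the integral of `2 u arccos (…)` over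
`0 ≤ u ≤ r`. For `u ≤ R - v` the arc is the full circle, which contributes the term
`π (min r (R - v))²`; for `u ≤ v - R` and for `u ≥ R + v` it has angle zero.
-/

section Isometry

variable {E F : Type*} [NormedAddCommGroup E] [InnerProductSpace ℝ E] [FiniteDimensional ℝ E]
  [NormedAddCommGroup F] [InnerProductSpace ℝ F] [FiniteDimensional ℝ F]

lemma exists_linearIsometryEquiv_apply_eq
    (hfin : Module.finrank ℝ E = Module.finrank ℝ F) {x : E} {y : F} (hxy : ‖x‖ = ‖y‖) :
    ∃ f : E ≃ₗᵢ[ℝ] F, f x = y := by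
  let e : E ≃ₗᵢ[ℝ] F :=
    (stdOrthonormalBasis ℝ E).equiv (stdOrthonormalBasis ℝ F) (finCongr hfin)
  have he : ‖e x‖ = ‖y‖ := by rw [e.norm_map, hxy]
  exact ⟨e.trans (Submodule.reflection (ℝ ∙ (e x - y))ᗮ), Submodule.reflection_sub he⟩

variable [MeasurableSpace E] [BorelSpace E] [MeasurableSpace F] [BorelSpace F]

lemma volume_closedBall_zero_inter_closedBall_eq_of_norm_eq
    (hfin : Module.finrank ℝ E = Module.finrank ℝ F) {x : E} {y : F} (hxy : ‖x‖ = ‖y‖)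
    (r R : ℝ) :
    volume (Metric.closedBall 0 r ∩ Metric.closedBall x R) =
      volume (Metric.closedBall 0 r ∩ Metric.closedBall y R) := by
  obtain ⟨f, rfl⟩ := exists_linearIsometryEquiv_apply_eq hfin hxy
  have hmeas : MeasurableSet (Metric.closedBall 0 r ∩ Metric.closedBall (f x) R) :=
    measurableSet_closedBall.inter measurableSet_closedBall
  rw [← f.measurePreserving.measure_preimage hmeas.nullMeasurableSet, Set.preimage_inter,
    f.preimage_closedBall, f.preimage_closedBall, map_zero, f.symm_apply_apply]

end Isometry

section Polar

lemma volume_eq_lintegral_volume_polarCoord {S : Set ℂ} (hS : MeasurableSet S) :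
    volume S = ∫⁻ u in Set.Ioi (0 : ℝ), ENNReal.ofReal u *
      volume {θ ∈ Set.Ioo (-π) π | Complex.polarCoord.symm (u, θ) ∈ S} := by
  have hcont : Continuous fun p : ℝ × ℝ => Complex.polarCoord.symm p := by
    simp only [Complex.polarCoord_symm_apply]
    fun_prop
  have hmeas : Measurable fun p : ℝ × ℝ =>
      ENNReal.ofReal p.1 * S.indicator 1 (Complex.polarCoord.symm p) :=
    (by fun_prop : Measurable fun p : ℝ × ℝ => ENNReal.ofReal p.1).mul
      ((measurable_one.indicator hS).comp hcont.measurable)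
  rw [← lintegral_indicator_one hS, ← Complex.lintegral_comp_polarCoord_symm, polarCoord_target,
    Measure.volume_eq_prod, ← Measure.prod_restrict]
  simp only [smul_eq_mul]
  rw [lintegral_prod _ hmeas.aemeasurable]
  refine lintegral_congr fun u => ?_
  have hslice : MeasurableSet ((fun θ => Complex.polarCoord.symm (u, θ)) ⁻¹' S) :=
    (hcont.comp (by fun_prop : Continuous fun θ : ℝ => (u, θ))).measurable hS
  calc ∫⁻ θ in Set.Ioo (-π) π, ENNReal.ofReal u * S.indicator 1 (Complex.polarCoord.symm (u, θ))
      = ENNReal.ofReal u * ∫⁻ θ in Set.Ioo (-π) π,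
          ((fun θ => Complex.polarCoord.symm (u, θ)) ⁻¹' S).indicator 1 θ :=
        lintegral_const_mul' _ _ ENNReal.ofReal_ne_top
    _ = ENNReal.ofReal u *
          volume {θ ∈ Set.Ioo (-π) π | Complex.polarCoord.symm (u, θ) ∈ S} := by
        rw [lintegral_indicator_one hslice, Measure.restrict_apply hslice, Set.inter_comm]
        rfl

lemma volume_closedBall_zero_inter_eq_lintegral {S : Set ℂ} (hS : MeasurableSet S) (r : ℝ) :
    volume (Metric.closedBall 0 r ∩ S) = ∫⁻ u in Set.Ioc 0 r, ENNReal.ofReal u *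
      volume {θ ∈ Set.Ioo (-π) π | Complex.polarCoord.symm (u, θ) ∈ S} := by
  rw [volume_eq_lintegral_volume_polarCoord (measurableSet_closedBall.inter hS),
    ← Set.Ioi_inter_Iic, Set.inter_comm (Set.Ioi 0), ← Measure.restrict_restrict measurableSet_Iic,
    ← lintegral_indicator measurableSet_Iic]
  refine setLIntegral_congr_fun measurableSet_Ioi fun u (hu : 0 < u) => ?_
  have hball (θ : ℝ) : Complex.polarCoord.symm (u, θ) ∈ Metric.closedBall 0 r ↔ u ≤ r := by
    rw [mem_closedBall_zero_iff, Complex.norm_polarCoord_symm, abs_of_pos hu]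
  simp only [Set.mem_inter_iff, hball]
  by_cases hur : u ≤ r <;> simp [hur, -Complex.polarCoord_symm_apply]

end Polar

lemma le_cos_iff_abs_le_arccos {c θ : ℝ} (hc : c ≤ 1) (hθ : |θ| ≤ π) :
    c ≤ cos θ ↔ |θ| ≤ arccos c := by
  rw [← cos_abs]
  constructor <;> intro h
  · simpa only [arccos_cos (abs_nonneg θ) hθ] using arccos_le_arccos h
  · rcases le_total (-1) c with hc' | hc'
    · simpa only [cos_arccos hc' hc] using
        cos_le_cos_of_nonneg_of_le_pi (abs_nonneg θ) (arccos_le_pi c) h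
    · exact hc'.trans (neg_one_le_cos _)

lemma volume_setOf_le_cos (c : ℝ) :
    volume {θ ∈ Set.Ioo (-π) π | c ≤ cos θ} = ENNReal.ofReal (2 * arccos c) := by
  rcases lt_or_ge 1 c with hc | hc
  · have hempty : {θ ∈ Set.Ioo (-π) π | c ≤ cos θ} = ∅ :=
      Set.eq_empty_of_forall_notMem fun θ hθ => (hθ.2.trans (cos_le_one θ)).not_gt hc
    rw [hempty, arccos_of_one_le hc.le, measure_empty, mul_zero, ENNReal.ofReal_zero]
  have hIcc : {θ ∈ Set.Icc (-π) π | c ≤ cos θ} = Set.Icc (-arccos c) (arccos c) := by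
    ext θ
    simp only [Set.mem_ofPred_eq, Set.mem_Icc, ← abs_le]
    exact ⟨fun h => (le_cos_iff_abs_le_arccos hc h.1).1 h.2, fun h =>
      have hθ := h.trans (arccos_le_pi c)
      ⟨hθ, (le_cos_iff_abs_le_arccos hc hθ).2 h⟩⟩
  calc volume {θ ∈ Set.Ioo (-π) π | c ≤ cos θ}
      = volume {θ ∈ Set.Icc (-π) π | c ≤ cos θ} :=
        measure_congr (Ioo_ae_eq_Icc.inter (ae_eq_refl {θ | c ≤ cos θ}))
    _ = ENNReal.ofReal (2 * arccos c) := by rw [hIcc, Real.volume_Icc, sub_neg_eq_add, two_mul]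

/-- Half of the angle subtended at the origin by the arc of the circle of radius `u` about the
origin that lies in a disc of radius `R` whose centre has distance `v` from the origin. The law of
cosines gives this meaning when `u` and `v` are positive; `arccos` takes the values `0` and `π` at
arguments beyond `1` and `-1`, as it should when the arc is empty or the whole circle. -/
noncomputable def arcHalfAngle (R v u : ℝ) : ℝ :=
  arccos ((u ^ 2 + v ^ 2 - R ^ 2) / (2 * u * v))

section ArcHalfAngle

variable {R r v u a b : ℝ}

lemma arcHalfAngle_nonneg (R v u : ℝ) : 0 ≤ arcHalfAngle R v u := arccos_nonneg _

lemma arcHalfAngle_le_pi (R v u : ℝ) : arcHalfAngle R v u ≤ π := arccos_le_pi _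

lemma arcHalfAngle_eq_pi (hv : 0 < v) (hu : 0 < u) (h : u + v ≤ R) : arcHalfAngle R v u = π := by
  have hsq : (u + v) ^ 2 ≤ R ^ 2 := pow_le_pow_left₀ (by positivity) h 2
  refine arccos_of_le_neg_one ((div_le_iff₀ (by positivity)).2 ?_)
  linarith

lemma arcHalfAngle_eq_zero (hv : 0 < v) (hu : 0 < u) (hR : 0 ≤ R) (h : R ≤ |u - v|) :
    arcHalfAngle R v u = 0 := by
  have hsq : R ^ 2 ≤ (u - v) ^ 2 := by simpa only [sq_abs] using pow_le_pow_left₀ hR h 2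
  refine arccos_of_one_le ((le_div_iff₀ (by positivity)).2 ?_)
  linarith

lemma sq_norm_polarCoord_symm_sub_ofReal (u θ v : ℝ) :
    ‖Complex.polarCoord.symm (u, θ) - v‖ ^ 2 = u ^ 2 + v ^ 2 - cos θ * (2 * u * v) := by
  rw [Complex.polarCoord_symm_apply, Complex.sq_norm, Complex.normSq_apply]
  simp only [Complex.sub_re, Complex.sub_im, Complex.mul_re, Complex.mul_im, Complex.add_re,
    Complex.add_im, Complex.ofReal_re, Complex.ofReal_im, Complex.I_re, Complex.I_im]
  linear_combination u ^ 2 * sin_sq_add_cos_sq θ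

lemma polarCoord_symm_mem_closedBall_ofReal_iff (hR : 0 ≤ R) (hv : 0 < v) (hu : 0 < u) (θ : ℝ) :
    Complex.polarCoord.symm (u, θ) ∈ Metric.closedBall (v : ℂ) R ↔
      (u ^ 2 + v ^ 2 - R ^ 2) / (2 * u * v) ≤ cos θ := by
  rw [mem_closedBall_iff_norm, ← sq_le_sq₀ (norm_nonneg _) hR, sq_norm_polarCoord_symm_sub_ofReal,
    div_le_iff₀ (by positivity), sub_le_comm]

lemma intervalIntegrable_mul_arcHalfAngle (R v a b : ℝ) :
    IntervalIntegrable (fun u => u * arcHalfAngle R v u) volume a b := by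
  have hmeas : Measurable (arcHalfAngle R v) := measurable_arccos.comp (by fun_prop)
  have hbound : IntervalIntegrable (fun u : ℝ => u * π) volume a b :=
    Continuous.intervalIntegrable (by fun_prop) a b
  refine hbound.mono_fun (by fun_prop) (.of_forall fun u => ?_)
  simp only [norm_mul, Real.norm_of_nonneg (arcHalfAngle_nonneg R v u),
    Real.norm_of_nonneg pi_nonneg]
  gcongr
  exact arcHalfAngle_le_pi R v u

lemma toReal_volume_closedBall_zero_inter_closedBall_ofReal (hR : 0 ≤ R)
    (hr : 0 ≤ r) (hv : 0 < v) :
    (volume (Metric.closedBall 0 r ∩ Metric.closedBall (v : ℂ) R)).toReal =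
      2 * ∫ u in 0..r, u * arcHalfAngle R v u := by
  have hslice : ∀ u ∈ Set.Ioc 0 r, ENNReal.ofReal u *
      volume {θ ∈ Set.Ioo (-π) π |
        Complex.polarCoord.symm (u, θ) ∈ Metric.closedBall (v : ℂ) R} =
      ENNReal.ofReal (2 * (u * arcHalfAngle R v u)) := fun u hu => by
    simp only [polarCoord_symm_mem_closedBall_ofReal_iff hR hv hu.1, volume_setOf_le_cos]
    rw [← ENNReal.ofReal_mul hu.1.le, mul_left_comm, arcHalfAngle]
  rw [volume_closedBall_zero_inter_eq_lintegral measurableSet_closedBall,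
    setLIntegral_congr_fun measurableSet_Ioc hslice, ← intervalIntegral.integral_const_mul,
    intervalIntegral.integral_of_le hr]
  refine (integral_eq_lintegral_of_nonneg_ae ?_ ?_).symm
  · filter_upwards [ae_restrict_mem measurableSet_Ioc] with u hu
    exact mul_nonneg zero_le_two (mul_nonneg hu.1.le (arcHalfAngle_nonneg R v u))
  · exact ((intervalIntegrable_mul_arcHalfAngle R v 0 r).const_mul 2).1.aestronglyMeasurable

lemma integral_mul_arcHalfAngle_of_add_le (hv : 0 < v) (ha : 0 ≤ a) (h : a + v ≤ R) :
    ∫ u in 0..a, u * arcHalfAngle R v u = π * a ^ 2 / 2 := by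
  calc ∫ u in 0..a, u * arcHalfAngle R v u = ∫ u in 0..a, u * π :=
        intervalIntegral.integral_congr_Ioo_of_le ha fun u hu => by
          simp only [arcHalfAngle_eq_pi hv hu.1 (by linarith [hu.2] : u + v ≤ R)]
    _ = π * a ^ 2 / 2 := by
        rw [intervalIntegral.integral_mul_const, integral_id]
        ring

lemma integral_mul_arcHalfAngle_eq_zero (hR : 0 ≤ R) (hv : 0 < v) (ha : 0 ≤ a) (hab : a ≤ b)
    (h : ∀ u ∈ Set.Ioc a b, R ≤ |u - v|) :
    ∫ u in a..b, u * arcHalfAngle R v u = 0 := by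
  refine intervalIntegral.integral_zero_ae (.of_forall fun u hu => ?_)
  rw [Set.uIoc_of_le hab] at hu
  rw [arcHalfAngle_eq_zero hv (ha.trans_lt hu.1) hR (h u hu), mul_zero]

lemma two_mul_integral_mul_arcHalfAngle_min_abs_sub (hR : 0 ≤ R) (hr : 0 ≤ r) (hv : 0 < v) :
    2 * ∫ u in 0..min r |R - v|, u * arcHalfAngle R v u = π * min r (max (R - v) 0) ^ 2 := by
  rcases le_total v R with hvR | hRv
  · have hsub : 0 ≤ R - v := sub_nonneg.2 hvR
    rw [abs_of_nonneg hsub, max_eq_left hsub, integral_mul_arcHalfAngle_of_add_le hv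
      (le_min hr hsub) (le_sub_iff_add_le.1 (min_le_right _ _))]
    ring
  · have hfar : ∀ u ∈ Set.Ioc 0 (min r |R - v|), R ≤ |u - v| := fun u hu => by
      have huv : u ≤ v - R := by
        simpa only [abs_of_nonpos (sub_nonpos.2 hRv), neg_sub] using hu.2.trans (min_le_right _ _)
      exact le_abs.2 (.inr (by linarith))
    rw [integral_mul_arcHalfAngle_eq_zero hR hv le_rfl (le_min hr (abs_nonneg _)) hfar,
      max_eq_right (sub_nonpos.2 hRv), min_eq_right hr]
    ring

lemma integral_mul_arcHalfAngle_min_add_eq_zero (hR : 0 ≤ R) (hr : 0 ≤ r) (hv : 0 < v) :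
    ∫ u in min r (R + v)..r, u * arcHalfAngle R v u = 0 := by
  refine integral_mul_arcHalfAngle_eq_zero hR hv (by positivity) (min_le_left _ _) fun u hu => ?_
  have huR : R + v < u := (min_lt_iff.1 hu.1).resolve_left hu.2.not_gt
  exact le_abs.2 (.inl (by linarith))

end ArcHalfAngle

/-- Area of the intersection of the disc `b(0,r)` with the disc `b(z,R)`
(`‖z‖ = v > 0`):
`v₂(b(0,r) ∩ b(z,R)) = π·(min(r, max(R−v,0)))²
  + 2·∫_{min(r,|R−v|)}^{min(r,R+v)} u·arccos((u²+v²−R²)/(2uv)) du`. -/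
theorem area_ball_inter_ball (R r : ℝ) (hR : 0 < R) (hr : 0 < r)
    (z : EuclideanSpace ℝ (Fin 2)) (v : ℝ) (hv : v = ‖z‖) (hv0 : 0 < v) :
    (volume (Metric.closedBall (0 : EuclideanSpace ℝ (Fin 2)) r ∩
        Metric.closedBall z R)).toReal =
      π * (min r (max (R - v) 0)) ^ 2 +
        2 * ∫ u in (min r |R - v|)..(min r (R + v)),
          u * Real.arccos ((u ^ 2 + v ^ 2 - R ^ 2) / (2 * u * v)) := by
  have hfin : Module.finrank ℝ (EuclideanSpace ℝ (Fin 2)) = Module.finrank ℝ ℂ := by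
    rw [finrank_euclideanSpace_fin, Complex.finrank_real_complex]
  have hnorm : ‖z‖ = ‖(v : ℂ)‖ := by rw [Complex.norm_of_nonneg hv0.le, hv]
  have hint := intervalIntegrable_mul_arcHalfAngle R v
  calc (volume (Metric.closedBall 0 r ∩ Metric.closedBall z R)).toReal
      = (volume (Metric.closedBall 0 r ∩ Metric.closedBall (v : ℂ) R)).toReal := by
        rw [volume_closedBall_zero_inter_closedBall_eq_of_norm_eq hfin hnorm]
    _ = 2 * ∫ u in 0..r, u * arcHalfAngle R v u :=
        toReal_volume_closedBall_zero_inter_closedBall_ofReal hR.le hr.le hv0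
    _ = 2 * (∫ u in 0..min r |R - v|, u * arcHalfAngle R v u) +
          2 * (∫ u in min r |R - v|..min r (R + v), u * arcHalfAngle R v u) +
          2 * ∫ u in min r (R + v)..r, u * arcHalfAngle R v u := by
        rw [← mul_add, ← mul_add, intervalIntegral.integral_add_adjacent_intervals (hint _ _)
          (hint _ _), intervalIntegral.integral_add_adjacent_intervals (hint _ _) (hint _ _)]
    _ = π * min r (max (R - v) 0) ^ 2 +
          2 * ∫ u in min r |R - v|..min r (R + v), u * arcHalfAngle R v u := by
        rw [two_mul_integral_mul_arcHalfAngle_min_abs_sub hR.le hr.le hv0,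
          integral_mul_arcHalfAngle_min_add_eq_zero hR.le hr.le hv0, mul_zero, add_zero]
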